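/- Let (Ω, F, μ) and (Ω̃, F̃, μ̃) be probability spaces carrying measurable A : Ω → ℝ^r, ξ : Ω → ℝ^d and Ã : Ω̃ → ℝ^r, ξ̃ : Ω̃ → ℝ^d, with ξ integrable, ∫ ξ dμ = 0, ξ independent of A, and likewise ξ̃ integrable, ∫ ξ̃ dμ̃ = 0, ξ̃ independent of Ã. Let g, g̃ : ℝ^r → ℝ^d be measurable with g∘A and g̃∘Ã integrable, and set X := g∘A + ξ and X̃ := g̃∘Ã + ξ̃. If the joint law of (X, A) under μ equals the joint law of (X̃, Ã) under μ̃, then g = g̃ almost everywhere with respect to the law of A, and consequently the joint law of (A, X − g∘A) under μ equals the joint law of (Ã, X̃ − g̃∘Ã) under μ̃. -/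

import Mathlib

open MeasureTheory ProbabilityTheory

/-- The integral of `g` over `s` w.r.t. the law of `A` depends only on the joint law. -/
lemma setIntegral_of_law {Ω : Type*} [MeasurableSpace Ω] (μ : Measure Ω)
    [IsProbabilityMeasure μ] {r d : ℕ} (A : Ω → Fin r → ℝ) (ξ : Ω → Fin d → ℝ)
    (hA : Measurable A) (hξ : Measurable ξ)
    (hξ1 : Integrable ξ μ) (hξ0 : ∫ ω, ξ ω ∂μ = 0) (hindep : IndepFun ξ A μ)
    (g : (Fin r → ℝ) → Fin d → ℝ) (hg : Measurable g)
    (hgA : Integrable (fun ω => g (A ω)) μ) (s : Set (Fin r → ℝ)) (hs : MeasurableSet s) :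
    ∫ x in s, g x ∂(Measure.map A μ) =
      ∫ p in Prod.snd ⁻¹' s, p.1 ∂(Measure.map (fun ω => (g (A ω) + ξ ω, A ω)) μ) := by
  have hzero : ∫ ω in A ⁻¹' s, ξ ω ∂μ = 0 := by
    have h := hindep.symm.integral_fun_comp_smul_comp (f := s.indicator (fun _ => (1 : ℝ)))
      (g := id) hA.aemeasurable hξ.aemeasurable
      ((measurable_const.indicator hs).aestronglyMeasurable)
      (measurable_id.aestronglyMeasurable)
    simp only [id, hξ0, smul_zero] at h
    rw [← integral_indicator (hA hs), ← h]
    congr 1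
    ext1 ω
    by_cases hω : A ω ∈ s <;> simp [hω]
  have hm : Measurable (fun ω => (g (A ω) + ξ ω, A ω)) := by fun_prop
  rw [setIntegral_map hs hg.aestronglyMeasurable hA.aemeasurable,
    setIntegral_map (measurable_snd hs) measurable_fst.aestronglyMeasurable hm.aemeasurable]
  change _ = ∫ ω in A ⁻¹' s, (g (A ω) + ξ ω) ∂μ
  rw [integral_add hgA.integrableOn hξ1.integrableOn, hzero, add_zero]

/-- Step (i) of Proposition genX_intra: two models `X = g ∘ A + ξ` and `X' = g' ∘ A' + ξ'`
with exogenous `A` independent of the mean-zero noise, inducing the same joint law of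
`(X, A)`, must have `g = g'` almost everywhere w.r.t. the law of `A`, and hence the same
joint law of `(A, X - g ∘ A)`. -/
theorem exogenous_decomposition_identification
    {Ω Ω' : Type*} [MeasurableSpace Ω] [MeasurableSpace Ω']
    (μ : Measure Ω) (μ' : Measure Ω')
    [IsProbabilityMeasure μ] [IsProbabilityMeasure μ']
    {r d : ℕ}
    (A : Ω → Fin r → ℝ) (ξ : Ω → Fin d → ℝ)
    (A' : Ω' → Fin r → ℝ) (ξ' : Ω' → Fin d → ℝ)
    (hA : Measurable A) (hξ : Measurable ξ)
    (hA' : Measurable A') (hξ' : Measurable ξ')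
    (hξ1 : Integrable ξ μ) (hξ0 : ∫ ω, ξ ω ∂μ = 0) (hindep : IndepFun ξ A μ)
    (hξ1' : Integrable ξ' μ') (hξ0' : ∫ ω, ξ' ω ∂μ' = 0) (hindep' : IndepFun ξ' A' μ')
    (g g' : (Fin r → ℝ) → Fin d → ℝ) (hg : Measurable g) (hg' : Measurable g')
    (hgA : Integrable (fun ω => g (A ω)) μ)
    (hgA' : Integrable (fun ω => g' (A' ω)) μ')
    (hlaw : Measure.map (fun ω => (g (A ω) + ξ ω, A ω)) μ
          = Measure.map (fun ω => (g' (A' ω) + ξ' ω, A' ω)) μ') :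
    g =ᵐ[Measure.map A μ] g' ∧
    Measure.map (fun ω => (A ω, (g (A ω) + ξ ω) - g (A ω))) μ
      = Measure.map (fun ω => (A' ω, (g' (A' ω) + ξ' ω) - g' (A' ω))) μ' := by
  have hm : Measurable (fun ω => (g (A ω) + ξ ω, A ω)) := by fun_prop
  have hm' : Measurable (fun ω => (g' (A' ω) + ξ' ω, A' ω)) := by fun_prop
  have hAA : Measure.map A μ = Measure.map A' μ' := by
    have h := congrArg (Measure.map Prod.snd) hlaw
    rw [Measure.map_map measurable_snd hm, Measure.map_map measurable_snd hm'] at h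
    exact h
  have hae : g =ᵐ[Measure.map A μ] g' := by
    refine Integrable.ae_eq_of_forall_setIntegral_eq g g' ?_ ?_ ?_
    · exact (integrable_map_measure hg.aestronglyMeasurable hA.aemeasurable).2 hgA
    · rw [hAA]
      exact (integrable_map_measure hg'.aestronglyMeasurable hA'.aemeasurable).2 hgA'
    · intro s hs _
      rw [setIntegral_of_law μ A ξ hA hξ hξ1 hξ0 hindep g hg hgA s hs, hlaw, hAA,
        setIntegral_of_law μ' A' ξ' hA' hξ' hξ1' hξ0' hindep' g' hg' hgA' s hs]
  refine ⟨hae, ?_⟩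
  have hF : Measurable (fun p : (Fin d → ℝ) × (Fin r → ℝ) => (p.2, p.1 - g' p.2)) := by fun_prop
  have h := congrArg (Measure.map
    (fun p : (Fin d → ℝ) × (Fin r → ℝ) => (p.2, p.1 - g' p.2))) hlaw
  rw [Measure.map_map hF hm, Measure.map_map hF hm'] at h
  refine Eq.trans (Measure.map_congr ?_) h
  filter_upwards [ae_of_ae_map hA.aemeasurable hae] with ω hω
  simp [hω]
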